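/- With the Newton-iteration setup (A_i, V_i, B_i as in the slope factorization recursion for P with extremal point at abscissa d), setting κ = NF(P)(d+1) + NF(P)(d−1) − 2·NF(P)(d) > 0, the rate of convergence is quadratic: for all i ≥ 0, NF(A_∞ − A_i)(x) ≥ NF(P)(x) + 2^i κ for all x in [0, d−1]. -/

import Mathlib

open Polynomial Set

noncomputable section

variable {K : Type*} [Field K]

/-- Map `WithTop ℤ` into `EReal`. -/
def toE : WithTop ℤ → EReal := WithTop.recTopCoe ⊤ (fun n => ((n : ℝ) : EReal))

/-- Newton function of a polynomial: the largest convex function lying below the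
points `(i, val aᵢ)`, realized as the sup of affine minorants. -/
def NF (v : AddValuation K (WithTop ℤ)) (P : K[X]) (x : ℝ) : EReal :=
  sSup {y : EReal | ∃ a b : ℝ,
    (∀ i : ℕ, i ≤ P.natDegree → ((a * (i : ℝ) + b : ℝ) : EReal) ≤ toE (v (P.coeff i))) ∧
    y = ((a * x + b : ℝ) : EReal)}

/-- The invariant `b_φ(Q) = min_{0 ≤ x ≤ deg Q} (NF(Q)(x) − φ(x))`. -/
def bE (v : AddValuation K (WithTop ℤ)) (φ : ℝ → EReal) (Q : K[X]) : EReal :=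
  sInf {y : EReal | ∃ x : ℝ, 0 ≤ x ∧ x ≤ (Q.natDegree : ℝ) ∧ y = NF v Q x - φ x}

/-- `x` has valuation at least the real number `r`. -/
def VGe (v : AddValuation K (WithTop ℤ)) (x : K) (r : ℝ) : Prop :=
  ((r : ℝ) : EReal) ≤ toE (v x)

lemma toE_top : toE ⊤ = ⊤ := rfl
lemma toE_coe (n : ℤ) : toE (n : WithTop ℤ) = ((n : ℝ) : EReal) := rfl

lemma vge_iff (v : AddValuation K (WithTop ℤ)) (x : K) (r : ℝ) :
    VGe v x r ↔ ∀ n : ℤ, v x = n → r ≤ n := by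
  unfold VGe
  cases h : v x using WithTop.recTopCoe with
  | top => simp [toE_top]
  | coe n =>
    rw [toE_coe, EReal.coe_le_coe_iff]
    constructor
    · intro h m hm
      have : n = m := by exact_mod_cast hm
      rwa [← this]
    · intro h
      exact h n rfl

lemma VGe.mono {v : AddValuation K (WithTop ℤ)} {x : K} {r s : ℝ} (h : VGe v x r) (hs : s ≤ r) :
    VGe v x s := le_trans (EReal.coe_le_coe_iff.2 hs) h

lemma VGe.zero {v : AddValuation K (WithTop ℤ)} {r : ℝ} : VGe v 0 r := by
  rw [vge_iff]; intro n hn; simp at hn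

lemma VGe.one {v : AddValuation K (WithTop ℤ)} : VGe v 1 0 := by
  rw [vge_iff]; intro n hn
  rw [AddValuation.map_one] at hn
  have : (0 : ℤ) = n := by exact_mod_cast hn
  simp [← this]

lemma VGe.neg {v : AddValuation K (WithTop ℤ)} {x : K} {r : ℝ} (h : VGe v x r) :
    VGe v (-x) r := by
  unfold VGe at *; rwa [AddValuation.map_neg]

lemma VGe.add {v : AddValuation K (WithTop ℤ)} {x y : K} {r : ℝ} (hx : VGe v x r)
    (hy : VGe v y r) : VGe v (x + y) r := by
  rw [vge_iff] at *
  intro n hn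
  have h := AddValuation.map_add v x y
  rw [hn] at h
  rcases min_le_iff.1 h with h | h
  · obtain ⟨m, hm⟩ := WithTop.ne_top_iff_exists.1 (ne_top_of_le_ne_top (WithTop.coe_ne_top) h)
    rw [← hm] at h
    have h1 := hx m hm.symm
    have h2 : m ≤ n := by exact_mod_cast h
    exact h1.trans (by exact_mod_cast h2)
  · obtain ⟨m, hm⟩ := WithTop.ne_top_iff_exists.1 (ne_top_of_le_ne_top (WithTop.coe_ne_top) h)
    rw [← hm] at h
    have h1 := hy m hm.symm
    have h2 : m ≤ n := by exact_mod_cast h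
    exact h1.trans (by exact_mod_cast h2)

lemma VGe.sub {v : AddValuation K (WithTop ℤ)} {x y : K} {r : ℝ} (hx : VGe v x r)
    (hy : VGe v y r) : VGe v (x - y) r := by
  rw [sub_eq_add_neg]; exact hx.add hy.neg

lemma VGe.mul {v : AddValuation K (WithTop ℤ)} {x y : K} {r s : ℝ} (hx : VGe v x r)
    (hy : VGe v y s) : VGe v (x * y) (r + s) := by
  rw [vge_iff] at *
  intro n hn
  rw [AddValuation.map_mul] at hn
  have hne : v x + v y ≠ ⊤ := by rw [hn]; exact WithTop.coe_ne_top
  rw [WithTop.add_ne_top] at hne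
  obtain ⟨a, ha⟩ := WithTop.ne_top_iff_exists.1 hne.1
  obtain ⟨b, hb⟩ := WithTop.ne_top_iff_exists.1 hne.2
  have h1 := hx a ha.symm
  have h2 := hy b hb.symm
  rw [← ha, ← hb] at hn
  have : a + b = n := by exact_mod_cast hn
  rw [← this]; push_cast; linarith

lemma VGe.sum {v : AddValuation K (WithTop ℤ)} {ι : Type*} {r : ℝ} (s : Finset ι) (f : ι → K)
    (h : ∀ i ∈ s, VGe v (f i) r) : VGe v (∑ i ∈ s, f i) r :=
  Finset.sum_induction f (fun x => VGe v x r) (fun _ _ => VGe.add) VGe.zero h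

lemma VGe.inv {v : AddValuation K (WithTop ℤ)} {x : K} {c : ℝ} (h : toE (v x) = ((c : ℝ) : EReal)) :
    x ≠ 0 ∧ VGe v x⁻¹ (-c) := by
  have hx : x ≠ 0 := by
    rintro rfl
    rw [AddValuation.map_zero, toE_top] at h
    exact (EReal.coe_ne_top c) h.symm
  refine ⟨hx, ?_⟩
  rw [vge_iff]
  intro n hn
  have h1 : v x + v x⁻¹ = 0 := by
    rw [← AddValuation.map_mul, mul_inv_cancel₀ hx, AddValuation.map_one]
  have hne : v x ≠ ⊤ := fun h' => hx ((AddValuation.top_iff v).1 h')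
  obtain ⟨m, hm⟩ := WithTop.ne_top_iff_exists.1 hne
  rw [← hm, toE_coe] at h
  have hc : (m : ℝ) = c := EReal.coe_eq_coe_iff.1 h
  rw [← hm, hn] at h1
  have : m + n = 0 := by exact_mod_cast h1
  have h3 : (m : ℝ) + n = 0 := by exact_mod_cast this
  linarith

/-- The coefficients of `S` lie above `φ + t`. -/
def GE' (v : AddValuation K (WithTop ℤ)) (φ : ℕ → ℝ) (t : ℝ) (S : K[X]) : Prop :=
  ∀ j, VGe v (S.coeff j) (φ j + t)

namespace GE'

variable {v : AddValuation K (WithTop ℤ)} {φ : ℕ → ℝ} {s t : ℝ} {S T : K[X]}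

lemma mono (h : GE' v φ t S) (hs : s ≤ t) : GE' v φ s S :=
  fun j => (h j).mono (by linarith)

lemma zero : GE' v φ t 0 := fun j => by rw [coeff_zero]; exact VGe.zero

lemma add (h : GE' v φ t S) (h' : GE' v φ t T) : GE' v φ t (S + T) :=
  fun j => by rw [coeff_add]; exact (h j).add (h' j)

lemma sub (h : GE' v φ t S) (h' : GE' v φ t T) : GE' v φ t (S - T) :=
  fun j => by rw [coeff_sub]; exact (h j).sub (h' j)

lemma neg (h : GE' v φ t S) : GE' v φ t (-S) :=
  fun j => by rw [coeff_neg]; exact (h j).neg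

lemma one {lam : ℝ} : GE' v (fun j => lam * j) 0 1 := by
  intro j
  rw [coeff_one]
  split_ifs with h
  · subst h; simpa using VGe.one
  · exact VGe.zero

lemma mul {lam : ℝ} (hφ : ∀ j k : ℕ, φ (j + k) ≤ φ j + lam * k)
    (h : GE' v (fun j => lam * j) s S) (h' : GE' v φ t T) : GE' v φ (s + t) (S * T) := by
  intro j
  rw [coeff_mul]
  refine VGe.sum _ _ fun x hx => ?_
  have hj := Finset.HasAntidiagonal.mem_antidiagonal.1 hx
  refine ((h x.1).mul (h' x.2)).mono ?_
  have := hφ x.2 x.1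
  rw [add_comm x.2, hj] at this
  dsimp only
  linarith

lemma mulLin {lam : ℝ} (h : GE' v (fun j => lam * j) s S) (h' : GE' v (fun j => lam * j) t T) :
    GE' v (fun j => lam * j) (s + t) (S * T) :=
  mul (lam := lam) (fun j k => by push_cast; linarith) h h'

end GE'

lemma mod_add_mul' (A S q : K[X]) : (A * q + S) % A = S % A := by
  rw [Polynomial.add_mod]
  have : A * q % A = 0 := (EuclideanDomain.mod_eq_zero).2 (dvd_mul_right _ _)
  rw [this, zero_add]

lemma div_add_mul' (A S q : K[X]) (hA : A ≠ 0) : (A * q + S) / A = q + S / A := by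
  have h1 := EuclideanDomain.div_add_mod (A * q + S) A
  have h2 := EuclideanDomain.div_add_mod S A
  rw [mod_add_mul'] at h1
  apply mul_left_cancel₀ hA
  linear_combination h1 - h2

section division

variable {v : AddValuation K (WithTop ℤ)} {φ : ℕ → ℝ} {c lam : ℝ} {d : ℕ} {A : K[X]}

lemma degA (hdA : A.natDegree ≤ d) (hc : toE (v (A.coeff d)) = ((c : ℝ) : EReal)) :
    A ≠ 0 ∧ A.degree = d := by
  have h := (VGe.inv hc).1
  have hA : A ≠ 0 := by rintro rfl; simp at h
  refine ⟨hA, ?_⟩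
  rw [degree_eq_natDegree hA, le_antisymm hdA (le_natDegree_of_ne_zero h)]

lemma div_exists (hφ : ∀ j k : ℕ, φ (j + k) ≤ φ j + lam * k)
    (hφd : ∀ j : ℕ, φ (d + j) = c + lam * j)
    (hdA : A.natDegree ≤ d) (hc : toE (v (A.coeff d)) = ((c : ℝ) : EReal))
    (hA : GE' v φ 0 A) (t : ℝ) (N : ℕ) : ∀ S : K[X], S.degree < N → GE' v φ t S →
      ∃ q r : K[X], S = A * q + r ∧ r.degree < d ∧ GE' v (fun j => lam * j) t q ∧ GE' v φ t r := by
  induction N with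
  | zero =>
    intro S hS hG
    exact ⟨0, S, by simp, lt_of_lt_of_le hS (by exact_mod_cast Nat.zero_le d), GE'.zero, hG⟩
  | succ N ih =>
    intro S hS hG
    by_cases hN : N < d
    · exact ⟨0, S, by simp, lt_of_lt_of_le hS (by exact_mod_cast hN), GE'.zero, hG⟩
    obtain ⟨e, rfl⟩ := Nat.exists_eq_add_of_le (not_lt.1 hN)
    set q0 : K[X] := C (S.coeff (d + e) * (A.coeff d)⁻¹) * X ^ e with hq0
    obtain ⟨hne, hinv⟩ := VGe.inv hc
    have hq0G : GE' v (fun j => lam * j) t q0 := by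
      intro j
      rw [hq0, coeff_C_mul_X_pow]
      split_ifs with h
      · subst h
        refine ((hG (d + j)).mul hinv).mono ?_
        rw [hφd]; linarith
      · exact VGe.zero
    have hqA : GE' v φ t (q0 * A) := by
      have := GE'.mul hφ hq0G hA
      rwa [add_zero] at this
    have hdeg : (S - q0 * A).degree < ((d + e : ℕ) : WithBot ℕ) := by
      rw [degree_lt_iff_coeff_zero]
      intro m hm
      have hco : (q0 * A).coeff m = S.coeff (d + e) * (A.coeff d)⁻¹ * A.coeff (m - e) := by
        rw [hq0, mul_assoc, coeff_C_mul, coeff_X_pow_mul', if_pos (by omega)]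
      rw [coeff_sub, hco]
      rcases hm.eq_or_lt with h | h
      · subst h
        rw [Nat.add_sub_cancel, mul_assoc, inv_mul_cancel₀ hne]; simp
      · have h1 : A.natDegree < m - e := by omega
        rw [coeff_eq_zero_of_natDegree_lt h1,
          (degree_lt_iff_coeff_zero _ _).1 hS m (by omega)]
        simp
    obtain ⟨q, r, h1, h2, h3, h4⟩ := ih _ hdeg (hG.sub hqA)
    exact ⟨q0 + q, r, by linear_combination h1, h2, hq0G.add h3, h4⟩

lemma div_bound (hφ : ∀ j k : ℕ, φ (j + k) ≤ φ j + lam * k)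
    (hφd : ∀ j : ℕ, φ (d + j) = c + lam * j)
    (hdA : A.natDegree ≤ d) (hc : toE (v (A.coeff d)) = ((c : ℝ) : EReal))
    (hA : GE' v φ 0 A) {t : ℝ} {S : K[X]} (hS : GE' v φ t S) :
    GE' v (fun j => lam * j) t (S / A) ∧ GE' v φ t (S % A) := by
  obtain ⟨q, r, h1, h2, h3, h4⟩ := div_exists hφ hφd hdA hc hA t (S.natDegree + 1) S
    (lt_of_le_of_lt degree_le_natDegree (by exact_mod_cast Nat.lt_succ_self _)) hS
  obtain ⟨hA0, hAd⟩ := degA hdA hc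
  rw [h1, mod_add_mul', div_add_mul' _ _ _ hA0, (Polynomial.mod_eq_self_iff hA0).2 (by rwa [hAd]),
    (Polynomial.div_eq_zero_iff hA0).2 (by rwa [hAd]), add_zero]
  exact ⟨h3, h4⟩

lemma toLin (hφ : ∀ j k : ℕ, φ (j + k) ≤ φ j + lam * k)
    (hφd : ∀ j : ℕ, φ (d + j) = c + lam * j) {t : ℝ} {S : K[X]} (hS : GE' v φ t S) :
    GE' v (fun j => lam * j) (t + c - lam * d) S := by
  intro j
  refine (hS j).mono ?_
  have h1 := hφ j d
  have h2 := hφd j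
  rw [add_comm] at h1
  dsimp only
  linarith

lemma div_bound_lin (hφ : ∀ j k : ℕ, φ (j + k) ≤ φ j + lam * k)
    (hφd : ∀ j : ℕ, φ (d + j) = c + lam * j)
    (hdA : A.natDegree ≤ d) (hc : toE (v (A.coeff d)) = ((c : ℝ) : EReal))
    (hA : GE' v φ 0 A) {t : ℝ} {S : K[X]} (hS : GE' v (fun j => lam * j) t S) :
    GE' v (fun j => lam * j) (t - c + lam * d) (S / A) ∧ GE' v (fun j => lam * j) t (S % A) := by
  have hA' := toLin hφ hφd hA
  have := div_bound (v := v) (φ := fun j => c + lam * (j - d)) (c := c) (lam := lam) (d := d)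
    (A := A) (t := t - c + lam * d) (S := S)
    (fun j k => by push_cast; linarith) (fun j => by push_cast; ring) hdA hc
    (fun j => (hA' j).mono (by dsimp only; linarith))
    (fun j => (hS j).mono (by dsimp only; linarith))
  exact ⟨this.1, fun j => (this.2 j).mono (by dsimp only; linarith)⟩

/-- The invariant of the Newton iteration. -/
structure NewtonInv (v : AddValuation K (WithTop ℤ)) (φ : ℕ → ℝ) (lam : ℝ) (d : ℕ) (P A V : K[X])
    (s : ℝ) : Prop where
  deg : A.natDegree ≤ d
  lead : A.coeff d = P.coeff d
  hA : GE' v φ 0 A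
  hV : GE' v (fun j => lam * j) 0 V
  hE : GE' v (fun j => lam * j) s ((1 - V * (P / A)) % A)
  hR : GE' v φ s (P % A)

lemma NewtonInv.step {P V A' V' : K[X]} {s : ℝ} (hs : 0 ≤ s)
    (hφ : ∀ j k : ℕ, φ (j + k) ≤ φ j + lam * k)
    (hφd : ∀ j : ℕ, φ (d + j) = c + lam * j)
    (hc : toE (v (P.coeff d)) = ((c : ℝ) : EReal))
    (hP : GE' v φ 0 P)
    (h : NewtonInv v φ lam d P A V s)
    (hA' : A' = A + (V * P) % A)
    (hV' : V' = (2 * V - V ^ 2 * (P / A')) % A') :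
    GE' v φ s (A' - A) ∧ NewtonInv v φ lam d P A' V' (2 * s) := by
  obtain ⟨hdeg, hlead, hA, hV, hE, hR⟩ := h
  have hcA : toE (v (A.coeff d)) = ((c : ℝ) : EReal) := by rw [hlead, hc]
  obtain ⟨hA0, hAd⟩ := degA hdeg hcA
  have dv := fun {t : ℝ} {S : K[X]} (hS : GE' v φ t S) => div_bound hφ hφd hdeg hcA hA hS
  have dvl := fun {t : ℝ} {S : K[X]} (hS : GE' v (fun j => lam * j) t S) =>
    div_bound_lin hφ hφd hdeg hcA hA hS
  have eP := EuclideanDomain.div_add_mod P A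
  have hB := (dv hP).1
  set B := P / A with hBdef
  set R := P % A with hRdef
  have eE := EuclideanDomain.div_add_mod (1 - V * B) A
  have hVB : GE' v (fun j => lam * j) 0 (1 - V * B) := by
    have := GE'.mulLin hV hB
    rw [add_zero] at this
    exact GE'.one.sub this
  have hf := (dvl hVB).1
  set E := (1 - V * B) % A with hEdef
  set f := (1 - V * B) / A with hfdef
  have hD1 : (V * P) % A = (V * R) % A := by
    rw [← mod_add_mul' A (V * R) (V * B)]
    congr 1
    linear_combination -V * eP
  have hVR : GE' v φ s (V * R) := by
    have := GE'.mul hφ hV hR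
    rwa [zero_add] at this
  have eD := EuclideanDomain.div_add_mod (V * R) A
  obtain ⟨hq, hD⟩ := dv hVR
  have hDdeg : ((V * R) % A).degree < A.degree := Polynomial.degree_mod_lt _ hA0
  rw [hD1] at hA'
  set D := (V * R) % A with hDdef
  set q := (V * R) / A with hqdef
  have hg : GE' v (fun j => lam * j) s (f * R + q * B) := by
    refine GE'.add ?_ ?_
    · exact (GE'.mulLin hf (toLin hφ hφd hR)).mono (by linarith)
    · exact (GE'.mulLin hq hB).mono (by linarith)
  set g := f * R + q * B with hgdef
  have hT : GE' v φ (2 * s) (E * R - g * D) :=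
    ((GE'.mul hφ hE hR).sub (GE'.mul hφ hg hD)).mono (by linarith)
  set T := E * R - g * D with hTdef
  have hPT : P = A' * (B + g) + T := by
    rw [hA', hTdef, hgdef]
    linear_combination -eP - R * eE - B * eD
  -- the new divisor
  have hDc : ∀ m, d ≤ m → D.coeff m = 0 := by
    intro m hm
    rw [hAd] at hDdeg
    exact (degree_lt_iff_coeff_zero _ _).1 hDdeg m hm
  have hdeg' : A'.natDegree ≤ d := by
    rw [natDegree_le_iff_coeff_eq_zero]
    intro m hm
    rw [hA', coeff_add, hDc m hm.le, coeff_eq_zero_of_natDegree_lt (by omega), add_zero]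
  have hlead' : A'.coeff d = P.coeff d := by
    rw [hA', coeff_add, hDc d le_rfl, add_zero, hlead]
  have hAA : GE' v φ 0 A' := by rw [hA']; exact hA.add (hD.mono hs)
  have hcA' : toE (v (A'.coeff d)) = ((c : ℝ) : EReal) := by rw [hlead', hc]
  obtain ⟨hA0', hAd'⟩ := degA hdeg' hcA'
  have dv' := fun {t : ℝ} {S : K[X]} (hS : GE' v φ t S) => div_bound hφ hφd hdeg' hcA' hAA hS
  have dvl' := fun {t : ℝ} {S : K[X]} (hS : GE' v (fun j => lam * j) t S) =>
    div_bound_lin hφ hφd hdeg' hcA' hAA hS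
  have hB' : GE' v (fun j => lam * j) 0 (P / A') := (dv' hP).1
  have hR' : P % A' = T % A' := by
    conv_lhs => rw [hPT]
    rw [mod_add_mul']
  have eB' : P / A' = B + g + T / A' := by
    conv_lhs => rw [hPT]
    rw [div_add_mul' _ _ _ hA0']
  have hTq := (dv' hT).1
  set B' := P / A' with hB'def
  set h := T / A' with hhdef
  have hF : GE' v (fun j => lam * j) s (E - V * (g + h) - f * D) := by
    refine (hE.sub ?_).sub ?_
    · have := GE'.mulLin hV (hg.add (hTq.mono (by linarith)))
      rwa [zero_add] at this
    · exact (GE'.mulLin hf (toLin hφ hφd hD)).mono (by linarith)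
  set F := E - V * (g + h) - f * D with hFdef
  have eF : 1 - V * B' = F + f * A' := by
    rw [hFdef, eB', hA']
    linear_combination -eE
  have eV := EuclideanDomain.div_add_mod (2 * V - V ^ 2 * B') A'
  have hVn : GE' v (fun j => lam * j) 0 (2 * V - V ^ 2 * B') := by
    have h1 := GE'.mulLin (GE'.mulLin hV hV) hB'
    rw [add_zero, add_zero, ← sq] at h1
    rw [two_mul]
    exact (hV.add hV).sub h1
  have hVV := (dvl' hVn).2
  rw [← hV'] at hVV eV
  set k := (2 * V - V ^ 2 * B') / A' with hkdef
  refine ⟨?_, hdeg', hlead', hAA, hVV, ?_, ?_⟩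
  · have : A' - A = D := by rw [hA']; ring
    rw [this]; exact hD
  · have e1 : 1 - V' * B' = A' * (2 * f * F + f ^ 2 * A' + k * B') + F * F := by
      linear_combination (-B') * eV + (1 - V * B' + F + f * A') * eF
    rw [← hB'def, e1, mod_add_mul']
    have := (dvl' (GE'.mulLin hF hF)).2
    rwa [← two_mul] at this
  · rw [hR']; exact (dv' hT).2

lemma NewtonInv.base {P A : K[X]} {s : ℝ} (hs : 0 ≤ s)
    (hφ : ∀ j k : ℕ, φ (j + k) ≤ φ j + lam * k)
    (hφd : ∀ j : ℕ, φ (d + j) = c + lam * j)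
    (hc : toE (v (P.coeff d)) = ((c : ℝ) : EReal))
    (hP : GE' v φ 0 P) (hPs : ∀ j, d < j → VGe v (P.coeff j) (φ j + s))
    (hA0 : A = ∑ i ∈ Finset.range (d + 1), C (P.coeff i) * X ^ i) :
    NewtonInv v φ lam d P A 1 s := by
  have hco : ∀ j, A.coeff j = if j ≤ d then P.coeff j else 0 := by
    intro j
    rw [hA0, finsetSum_coeff]
    simp only [coeff_C_mul_X_pow]
    rw [Finset.sum_ite_eq]
    simp
  have hdeg : A.natDegree ≤ d := by
    rw [natDegree_le_iff_coeff_eq_zero]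
    intro m hm
    rw [hco, if_neg (by omega)]
  have hlead : A.coeff d = P.coeff d := by rw [hco, if_pos le_rfl]
  have hcA : toE (v (A.coeff d)) = ((c : ℝ) : EReal) := by rw [hlead, hc]
  have hA : GE' v φ 0 A := by
    intro j
    rw [hco]
    split_ifs
    · exact hP j
    · exact VGe.zero
  have hT : GE' v φ s (P - A) := by
    intro j
    rw [coeff_sub, hco]
    split_ifs with h
    · rw [sub_self]; exact VGe.zero
    · rw [sub_zero]; exact hPs j (by omega)
  obtain ⟨hAne, hAd⟩ := degA hdeg hcA
  have hd := div_bound hφ hφd hdeg hcA hA hT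
  have eP : P = A * 1 + (P - A) := by ring
  have e1 : P / A = 1 + (P - A) / A := by
    conv_lhs => rw [eP]
    rw [div_add_mul' _ _ _ hAne]
  have e2 : P % A = (P - A) % A := by
    conv_lhs => rw [eP]
    rw [mod_add_mul']
  refine ⟨hdeg, hlead, hA, GE'.one, ?_, ?_⟩
  · have : 1 - 1 * (P / A) = -((P - A) / A) := by rw [e1]; ring
    rw [this]
    exact (div_bound_lin hφ hφd hdeg hcA hA hd.1.neg).2
  · rw [e2]; exact hd.2

end division

lemma newton_bound (v : AddValuation K (WithTop ℤ)) (P : K[X]) (d : ℕ) (φ : ℕ → ℝ) (c lam κ : ℝ)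
    (hκ : 0 ≤ κ)
    (hφ : ∀ j k : ℕ, φ (j + k) ≤ φ j + lam * k)
    (hφd : ∀ j : ℕ, φ (d + j) = c + lam * j)
    (hc : toE (v (P.coeff d)) = ((c : ℝ) : EReal))
    (hP : GE' v φ 0 P) (hPs : ∀ j, d < j → VGe v (P.coeff j) (φ j + κ))
    (A V : ℕ → K[X])
    (hA0 : A 0 = ∑ i ∈ Finset.range (d + 1), C (P.coeff i) * X ^ i)
    (hV0 : V 0 = 1)
    (hArec : ∀ i, A (i + 1) = A i + (V i * P) % A i)
    (hVrec : ∀ i, V (i + 1) = (2 * V i - (V i) ^ 2 * (P / A (i + 1))) % A (i + 1))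
    (Ainf : K[X])
    (hlim : ∀ j : ℕ, ∀ M : ℤ, ∃ N : ℕ, ∀ i ≥ N, (M : WithTop ℤ) ≤ v ((A i - Ainf).coeff j))
    (i : ℕ) : GE' v φ (2 ^ i * κ) (Ainf - A i) := by
  have hI : ∀ i, NewtonInv v φ lam d P (A i) (V i) (2 ^ i * κ) := by
    intro i
    induction i with
    | zero => rw [hV0, pow_zero, one_mul]; exact NewtonInv.base hκ hφ hφd hc hP hPs hA0
    | succ i ih =>
      have := (NewtonInv.step (by positivity) hφ hφd hc hP ih (hArec i) (hVrec i)).2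
      rwa [← mul_assoc, ← pow_succ'] at this
  have hstep : ∀ i, GE' v φ (2 ^ i * κ) (A (i + 1) - A i) := fun i =>
    (NewtonInv.step (by positivity) hφ hφd hc hP (hI i) (hArec i) (hVrec i)).1
  have hcauchy : ∀ k, GE' v φ (2 ^ i * κ) (A (i + k) - A i) := by
    intro k
    induction k with
    | zero => simpa using GE'.zero
    | succ k ih =>
      have h1 := (hstep (i + k)).mono (s := 2 ^ i * κ)
        (mul_le_mul_of_nonneg_right (pow_le_pow_right₀ (by norm_num) (by omega)) hκ)
      have h2 : A (i + (k + 1)) - A i = (A (i + k + 1) - A (i + k)) + (A (i + k) - A i) := by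
        rw [← add_assoc]; ring
      rw [h2]; exact h1.add ih
  intro j
  obtain ⟨M, hM⟩ := exists_int_ge (φ j + 2 ^ i * κ)
  obtain ⟨N, hN⟩ := hlim j M
  have h1 := hN (i + N) (by omega)
  have h2 : VGe v ((A (i + N) - Ainf).coeff j) (φ j + 2 ^ i * κ) := by
    rw [vge_iff]
    intro n hn
    rw [hn] at h1
    have : M ≤ n := by exact_mod_cast h1
    exact hM.trans (by exact_mod_cast this)
  have h3 : Ainf - A i = (A (i + N) - A i) - (A (i + N) - Ainf) := by ring
  rw [h3, coeff_sub]
  exact (hcauchy N j).sub h2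

lemma NF_le (v : AddValuation K (WithTop ℤ)) (P : K[X]) (a b x : ℝ)
    (h : ∀ j, VGe v (P.coeff j) (a * j + b)) : ((a * x + b : ℝ) : EReal) ≤ NF v P x :=
  le_sSup ⟨a, b, fun i _ => h i, rfl⟩

lemma minor_all (v : AddValuation K (WithTop ℤ)) (P : K[X]) (a b : ℝ)
    (h : ∀ i : ℕ, i ≤ P.natDegree → ((a * (i : ℝ) + b : ℝ) : EReal) ≤ toE (v (P.coeff i))) (j : ℕ) :
    VGe v (P.coeff j) (a * j + b) := by
  by_cases hj : j ≤ P.natDegree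
  · exact h j hj
  · rw [coeff_eq_zero_of_natDegree_lt (by omega)]; exact VGe.zero

lemma exists_minor (v : AddValuation K (WithTop ℤ)) (P : K[X]) (x y ε : ℝ) (hε : 0 < ε)
    (h : NF v P x = ((y : ℝ) : EReal)) :
    ∃ a b : ℝ, (∀ j : ℕ, VGe v (P.coeff j) (a * j + b)) ∧ y - ε < a * x + b := by
  have h1 : ((y - ε : ℝ) : EReal) < NF v P x := by
    rw [h, EReal.coe_lt_coe_iff]; linarith
  obtain ⟨z, ⟨a, b, hab, rfl⟩, hz⟩ := lt_sSup_iff.1 h1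
  exact ⟨a, b, minor_all v P a b hab, EReal.coe_lt_coe_iff.1 hz⟩

lemma vge_of_eps (v : AddValuation K (WithTop ℤ)) (x : K) (r k : ℝ) (hk : 0 < k)
    (h : ∀ ε > 0, VGe v x (r - ε * k)) : VGe v x r := by
  rw [vge_iff]
  intro n hn
  by_contra hlt
  push Not at hlt
  have h1 := h ((r - n) / (2 * k)) (by apply div_pos <;> linarith)
  rw [vge_iff] at h1
  have h2 := h1 n hn
  have h3 : (r - n) / (2 * k) * k = (r - n) / 2 := by field_simp
  rw [h3] at h2
  linarith

/-- quadratic rate of convergence of the Newton iteration: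
`NF(A_∞ − A_i)(x) ≥ NF(P)(x) + 2ⁱκ` on `[0,d−1]`, `κ = NF(P)(d+1)+NF(P)(d−1)−2NF(P)(d)`. -/
theorem stmt10 (v : AddValuation K (WithTop ℤ))
    (P : K[X]) (hP : P ≠ 0) (n d : ℕ) (hn : P.natDegree = n)
    (h0d : 0 < d) (hdn : d < n)
    (c lam0 lam1 : ℝ) (hlt : lam0 < lam1)
    (hd : NF v P (d : ℝ) = ((c : ℝ) : EReal))
    (hleft : NF v P ((d : ℝ) - 1) = ((c - lam0 : ℝ) : EReal))
    (hright : NF v P ((d : ℝ) + 1) = ((c + lam1 : ℝ) : EReal))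
    (A V : ℕ → K[X])
    (hA0 : A 0 = ∑ i ∈ Finset.range (d + 1), C (P.coeff i) * X ^ i)
    (hV0 : V 0 = 1)
    (hArec : ∀ i, A (i + 1) = A i + (V i * P) % A i)
    (hVrec : ∀ i, V (i + 1) = (2 * V i - (V i) ^ 2 * (P / A (i + 1))) % A (i + 1))
    (Ainf : K[X]) (hdvd : Ainf ∣ P) (hdeg : Ainf.natDegree = d)
    (hldcf : Ainf.coeff d = P.coeff d)
    (hNFinf : ∀ x ∈ Set.Icc (0 : ℝ) (d : ℝ), NF v Ainf x = NF v P x)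
    (hlim : ∀ j : ℕ, ∀ M : ℤ, ∃ N : ℕ, ∀ i ≥ N, (M : WithTop ℤ) ≤ v ((A i - Ainf).coeff j)) :
    ∀ i : ℕ, ∀ x ∈ Set.Icc (0 : ℝ) ((d : ℝ) - 1),
      NF v P x + (((2 : ℝ) ^ i * (lam1 - lam0) : ℝ) : EReal) ≤ NF v (Ainf - A i) x := by
  have hup : ∀ a b : ℝ, (∀ j : ℕ, VGe v (P.coeff j) (a * j + b)) → a * d + b ≤ c := by
    intro a b h
    have := NF_le v P a b d h
    rwa [hd, EReal.coe_le_coe_iff] at this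
  have hL1 : ∀ j, d < j → VGe v (P.coeff j) (c + lam1 * (j - d)) := by
    intro j hj
    have hj' : ((d : ℝ) + 1) ≤ j := by exact_mod_cast hj
    apply vge_of_eps v _ _ (j - d) (by linarith)
    intro ε hε
    obtain ⟨a, b, hab, hy⟩ := exists_minor v P _ _ ε hε hright
    have h1 := hup a b hab
    refine (hab j).mono ?_
    have h2 : lam1 - ε ≤ a := by linarith
    nlinarith [mul_nonneg (sub_nonneg.2 h2) (sub_nonneg.2 hj')]
  have hL0 : ∀ j, j < d → VGe v (P.coeff j) (c + lam0 * (j - d)) := by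
    intro j hj
    have hj' : (j : ℝ) + 1 ≤ d := by exact_mod_cast hj
    apply vge_of_eps v _ _ (d - j) (by linarith)
    intro ε hε
    obtain ⟨a, b, hab, hy⟩ := exists_minor v P _ _ ε hε hleft
    have h1 := hup a b hab
    refine (hab j).mono ?_
    have h2 : a ≤ lam0 + ε := by linarith
    nlinarith [mul_nonneg (sub_nonneg.2 h2) (sub_nonneg.2 hj')]
  have hdge : VGe v (P.coeff d) c := by
    unfold VGe
    rw [← hd]
    apply sSup_le
    rintro y ⟨a, b, hab, rfl⟩
    exact minor_all v P a b hab d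
  have hdc : toE (v (P.coeff d)) = ((c : ℝ) : EReal) := by
    refine le_antisymm ?_ hdge
    by_contra hlt'
    rw [not_le] at hlt'
    obtain ⟨z, hz1, hz2⟩ := EReal.lt_iff_exists_real_btwn.1 hlt'
    rw [EReal.coe_lt_coe_iff] at hz1
    set ε := min ((lam1 - lam0) / 2) (z - c) with hε
    have hε1 : ε ≤ (lam1 - lam0) / 2 := min_le_left _ _
    have hε2 : ε ≤ z - c := min_le_right _ _
    have hε0 : 0 < ε := lt_min (by linarith) (by linarith)
    have := hup ((lam0 + lam1) / 2) (c + ε - (lam0 + lam1) / 2 * d) (by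
      intro j
      rcases lt_trichotomy j d with h | h | h
      · refine (hL0 j h).mono ?_
        have hj' : (j : ℝ) + 1 ≤ d := by exact_mod_cast h
        nlinarith
      · subst h
        exact VGe.mono (r := z) hz2.le (by linarith)
      · refine (hL1 j h).mono ?_
        have hj' : (d : ℝ) + 1 ≤ j := by exact_mod_cast h
        nlinarith)
    linarith
  have hL0' : ∀ j, VGe v (P.coeff j) (c + lam0 * (j - d)) := by
    intro j
    rcases lt_trichotomy j d with h | h | h
    · exact hL0 j h
    · subst h; simpa using hdge
    · refine (hL1 j h).mono ?_
      have hj' : (d : ℝ) + 1 ≤ j := by exact_mod_cast h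
      nlinarith
  intro i x hx
  have hmain : ∀ a b : ℝ, (∀ j : ℕ, VGe v (P.coeff j) (a * j + b)) → a ≤ lam0 →
      ∀ j, VGe v ((Ainf - A i).coeff j) (a * j + (b + 2 ^ i * (lam1 - lam0))) := by
    intro a b hab ha j
    have hab' := hup a b hab
    have hbig : ∀ j : ℕ, d ≤ j → max (a * j + b) (c + lam0 * (j - d)) = c + lam0 * (j - d) := by
      intro j hj
      have hj' : (d : ℝ) ≤ j := by exact_mod_cast hj
      apply max_eq_right
      nlinarith
    have := newton_bound v P d (fun j => max (a * j + b) (c + lam0 * (j - d))) c lam0 (lam1 - lam0)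
      (by linarith) (by
        intro j k
        have hk : (0 : ℝ) ≤ k := Nat.cast_nonneg k
        have h1 := le_max_left (a * (j : ℝ) + b) (c + lam0 * (j - d))
        have h2 := le_max_right (a * (j : ℝ) + b) (c + lam0 * (j - d))
        push_cast
        apply max_le <;> nlinarith)
      (by
        intro j
        beta_reduce
        rw [hbig _ (by omega)]
        push_cast; ring) hdc
      (by
        intro j
        beta_reduce
        rw [add_zero]
        rcases max_choice (a * (j : ℝ) + b) (c + lam0 * (j - d)) with h | h <;> rw [h]
        · exact hab j
        · exact hL0' j)
      (by
        intro j hj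
        beta_reduce
        rw [hbig j hj.le]
        refine (hL1 j hj).mono ?_
        have hj' : (d : ℝ) + 1 ≤ j := by exact_mod_cast hj
        nlinarith) A V hA0 hV0 hArec hVrec Ainf hlim i j
    refine this.mono ?_
    have h1 := le_max_left (a * (j : ℝ) + b) (c + lam0 * (j - d))
    dsimp only
    linarith
  rw [← EReal.le_sub_iff_add_le (Or.inl (EReal.coe_ne_bot _)) (Or.inl (EReal.coe_ne_top _))]
  apply sSup_le
  rintro y ⟨a, b, hab, rfl⟩
  rw [EReal.le_sub_iff_add_le (Or.inl (EReal.coe_ne_bot _)) (Or.inl (EReal.coe_ne_top _)),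
    ← EReal.coe_add]
  have hab := minor_all v P a b hab
  rcases le_total a lam0 with ha | ha
  · have := NF_le v (Ainf - A i) a _ x (hmain a b hab ha)
    rwa [← add_assoc] at this
  · have := NF_le v (Ainf - A i) lam0 _ x (hmain lam0 (c - lam0 * d) (fun j =>
      (hL0' j).mono (by linarith)) le_rfl)
    refine le_trans ?_ this
    rw [EReal.coe_le_coe_iff]
    have h1 := hup a b hab
    have h2 : x ≤ d := by linarith [hx.2]
    nlinarith
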